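/- arXiv:2511.01587 — 9 statements merged into one kernel-verified Lean document; each statement's English description precedes it below -/
import Mathlib

section
/- All entries of B̃ are nonnegative and, for every j ∈ {0,…,m₂}, the row sum satisfies Σ_{ℓ=0}^{m₂} B̃_{j,ℓ} = Σ_{ℓ=0}^{m₂−1} ∫_{y_ℓ}^{y_{ℓ+1}} f(ξ − y_j) dξ ≤ 1. Consequently ‖B̃‖_∞ ≤ 1 and, for any m₁ ≥ 0 and λ > 0, the jump matrix B = I_{m₁+1} ⊗ (λB̃) satisfies ‖B‖_∞ ≤ λ, where ‖·‖_∞ denotes the maximum-row-sum matrix norm. -/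
open MeasureTheory

/-- F_{0,j,ℓ} = ∫_{y_ℓ}^{y_{ℓ+1}} f(ξ − y_j) dξ. -/
noncomputable def F0 (y : ℕ → ℝ) (f : ℝ → ℝ) (j ℓ : ℕ) : ℝ :=
  ∫ ξ in (y ℓ)..(y (ℓ+1)), f (ξ - y j)

/-- F_{1,j,ℓ} = ∫_{y_ℓ}^{y_{ℓ+1}} ξ f(ξ − y_j) dξ. -/
noncomputable def F1 (y : ℕ → ℝ) (f : ℝ → ℝ) (j ℓ : ℕ) : ℝ :=
  ∫ ξ in (y ℓ)..(y (ℓ+1)), ξ * f (ξ - y j)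

/-- The (m₂+1)×(m₂+1) jump quadrature matrix B̃. -/
noncomputable def Btilde (m₂ : ℕ) (y : ℕ → ℝ) (Δy : ℝ) (f : ℝ → ℝ) :
    Matrix (Fin (m₂+1)) (Fin (m₂+1)) ℝ :=
  Matrix.of fun j ℓ =>
    if ℓ.val = 0 then
      (y 1 * F0 y f j.val 0 - F1 y f j.val 0) / Δy
    else if ℓ.val = m₂ then
      (F1 y f j.val (m₂-1) - y (m₂-1) * F0 y f j.val (m₂-1)) / Δy
    else
      (F1 y f j.val (ℓ.val-1) - y (ℓ.val-1) * F0 y f j.val (ℓ.val-1)) / Δy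
        + (y (ℓ.val+1) * F0 y f j.val ℓ.val - F1 y f j.val ℓ.val) / Δy

theorem jm_cell (f : ℝ → ℝ) (hf0 : ∀ ξ : ℝ, 0 ≤ f ξ) (hfi : Integrable f)
    (a b c : ℝ) (hab : a ≤ b) :
    0 ≤ (∫ ξ in a..b, ξ * f (ξ - c)) - a * ∫ ξ in a..b, f (ξ - c) ∧
    0 ≤ b * (∫ ξ in a..b, f (ξ - c)) - ∫ ξ in a..b, ξ * f (ξ - c) := by
  have h0 : IntervalIntegrable (fun ξ => f (ξ - c)) volume a b :=
    (hfi.comp_sub_right c).intervalIntegrable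
  have h1 : IntervalIntegrable (fun ξ => ξ * f (ξ - c)) volume a b :=
    h0.continuousOn_mul continuousOn_id
  rw [← intervalIntegral.integral_const_mul, ← intervalIntegral.integral_const_mul]
  constructor
  · rw [sub_nonneg]
    exact intervalIntegral.integral_mono_on hab (h0.const_mul a) h1
      (fun x hx => mul_le_mul_of_nonneg_right hx.1 (hf0 _))
  · rw [sub_nonneg]
    exact intervalIntegral.integral_mono_on hab h1 (h0.const_mul b)
      (fun x hx => mul_le_mul_of_nonneg_right hx.2 (hf0 _))

theorem jm_sum (m : ℕ) (a b : ℕ → ℝ) :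
    ∑ l ∈ Finset.range (m+1), ((if l = 0 then 0 else a (l-1)) + (if l = m then 0 else b l))
      = ∑ l ∈ Finset.range m, (a l + b l) := by
  rw [Finset.sum_add_distrib, Finset.sum_range_succ', Finset.sum_range_succ _ m,
    Finset.sum_add_distrib]
  simp only [Nat.add_eq_zero_iff, one_ne_zero, and_false, if_false, if_true, add_zero,
    Nat.add_sub_cancel]
  congr 1
  apply Finset.sum_congr rfl
  intro x hx
  rw [if_neg (Finset.mem_range.1 hx).ne]

theorem jm_entry (m₂ : ℕ) (hm₂ : 1 ≤ m₂) (y : ℕ → ℝ) (Δy : ℝ) (f : ℝ → ℝ) (j l : Fin (m₂+1)) :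
    Btilde m₂ y Δy f j l =
      (if l.val = 0 then 0 else
        (F1 y f j.val (l.val-1) - y (l.val-1) * F0 y f j.val (l.val-1)) / Δy)
      + (if l.val = m₂ then 0 else
        (y (l.val+1) * F0 y f j.val l.val - F1 y f j.val l.val) / Δy) := by
  simp only [Btilde, Matrix.of_apply]
  by_cases h0 : l.val = 0
  · have : ¬ (0 = m₂) := by omega
    simp [h0, this]
  · by_cases h1 : l.val = m₂
    · have : m₂ ≠ 0 := by omega
      simp [h1, this]
    · simp [h0, h1]

/-- All entries of B̃ are nonnegative and every row sum equals
Σ_{ℓ=0}^{m₂−1} ∫_{y_ℓ}^{y_{ℓ+1}} f(ξ − y_j) dξ ≤ 1.  Consequently ‖B̃‖_∞ ≤ 1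
(maximum-row-sum norm) and, for any m₁ ≥ 0 and λ > 0, the jump matrix
B = I_{m₁+1} ⊗ (λB̃) satisfies ‖B‖_∞ ≤ λ. -/
theorem jump_matrix_row_sums
    (f : ℝ → ℝ) (hf0 : ∀ ξ : ℝ, 0 ≤ f ξ) (hfi : Integrable f)
    (hfb : BddAbove (Set.range f)) (hf1 : (∫ ξ : ℝ, f ξ) = 1)
    (m₂ : ℕ) (hm₂ : 1 ≤ m₂) (y₀ Δy : ℝ) (hΔy : 0 < Δy) :
    let y : ℕ → ℝ := fun k => y₀ + k * Δy
    let B := Btilde m₂ y Δy f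
    (∀ j ℓ : Fin (m₂+1), 0 ≤ B j ℓ) ∧
    (∀ j : Fin (m₂+1),
      ∑ ℓ : Fin (m₂+1), B j ℓ
        = ∑ ℓ ∈ Finset.range m₂, ∫ ξ in (y ℓ)..(y (ℓ+1)), f (ξ - y j.val)) ∧
    (∀ j : Fin (m₂+1), ∑ ℓ : Fin (m₂+1), B j ℓ ≤ 1) ∧
    (⨆ j : Fin (m₂+1), ∑ ℓ : Fin (m₂+1), |B j ℓ|) ≤ 1 ∧
    (∀ (m₁ : ℕ) (lam : ℝ), 0 < lam →
      (⨆ p : Fin (m₁+1) × Fin (m₂+1),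
        ∑ q : Fin (m₁+1) × Fin (m₂+1),
          |(Matrix.kroneckerMap (· * ·)
              (1 : Matrix (Fin (m₁+1)) (Fin (m₁+1)) ℝ) (lam • B)) p q|) ≤ lam) := by
  intro y B
  have hy : ∀ k, y (k+1) = y k + Δy := by
    intro k; simp only [y]; push_cast; ring
  have hmono : ∀ k, y k ≤ y (k+1) := fun k => by rw [hy]; linarith
  have ha : ∀ j l, 0 ≤ (F1 y f j l - y l * F0 y f j l) / Δy := fun j l =>
    div_nonneg (jm_cell f hf0 hfi _ _ _ (hmono l)).1 hΔy.le
  have hb : ∀ j l, 0 ≤ (y (l+1) * F0 y f j l - F1 y f j l) / Δy := fun j l =>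
    div_nonneg (jm_cell f hf0 hfi _ _ _ (hmono l)).2 hΔy.le
  have h1 : ∀ j ℓ : Fin (m₂+1), 0 ≤ B j ℓ := by
    intro j l
    simp only [B]
    rw [jm_entry m₂ hm₂]
    apply add_nonneg <;> split_ifs
    · exact le_rfl
    · exact ha _ _
    · exact le_rfl
    · exact hb _ _
  have h2 : ∀ j : Fin (m₂+1),
      ∑ ℓ : Fin (m₂+1), B j ℓ
        = ∑ ℓ ∈ Finset.range m₂, ∫ ξ in (y ℓ)..(y (ℓ+1)), f (ξ - y j.val) := by
    intro j
    simp only [B, jm_entry m₂ hm₂]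
    rw [Fin.sum_univ_eq_sum_range (fun l : ℕ =>
      (if l = 0 then 0 else (F1 y f j.val (l-1) - y (l-1) * F0 y f j.val (l-1)) / Δy)
      + (if l = m₂ then 0 else (y (l+1) * F0 y f j.val l - F1 y f j.val l) / Δy)) (m₂+1),
      jm_sum m₂ (fun l => (F1 y f j.val l - y l * F0 y f j.val l) / Δy)
        (fun l => (y (l+1) * F0 y f j.val l - F1 y f j.val l) / Δy)]
    apply Finset.sum_congr rfl
    intro l _
    change _ = F0 y f j.val l
    rw [hy]
    field_simp
    ring
  have h3 : ∀ j : Fin (m₂+1), ∑ ℓ : Fin (m₂+1), B j ℓ ≤ 1 := by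
    intro j
    have hi := hfi.comp_sub_right (y j.val)
    rw [h2, intervalIntegral.sum_integral_adjacent_intervals
      (fun k _ => hi.intervalIntegrable),
      intervalIntegral.integral_of_le (monotone_nat_of_le_succ hmono (Nat.zero_le m₂))]
    refine (setIntegral_le_integral hi (Filter.Eventually.of_forall fun x => hf0 _)).trans ?_
    rw [integral_sub_right_eq_self f (y j.val), hf1]
  have h4 : ∀ j : Fin (m₂+1), ∑ ℓ : Fin (m₂+1), |B j ℓ| ≤ 1 := by
    intro j
    simp only [abs_of_nonneg (h1 _ _)]
    exact h3 j
  refine ⟨h1, h2, h3, ciSup_le h4, ?_⟩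
  intro m₁ lam hl
  apply ciSup_le
  rintro ⟨i, j⟩
  rw [Fintype.sum_prod_type, Finset.sum_eq_single i]
  · simp only [Matrix.kroneckerMap_apply, Matrix.one_apply_eq, one_mul, Matrix.smul_apply,
      smul_eq_mul, abs_mul, abs_of_pos hl]
    rw [← Finset.mul_sum]
    exact mul_le_of_le_one_right hl.le (h4 j)
  · intro k _ hk
    simp [Matrix.kroneckerMap_apply, Matrix.one_apply_ne hk.symm]
  · simp
end

section
/- For any λ > 0 and any m₁ ≥ 0, the jump matrix B = I_{m₁+1} ⊗ (λB̃) satisfies ‖B‖₂ ≤ λ·√(L_y·‖f‖_∞); in particular its logarithmic ℓ2-norm satisfies μ₂[B] ≤ λ·√(L_y·‖f‖_∞). -/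
open MeasureTheory Matrix

/-- The Euclidean (ℓ2) norm of a vector. -/
noncomputable def l2norm {n : Type*} [Fintype n] (v : n → ℝ) : ℝ :=
  Real.sqrt (∑ i, (v i)^2)

/-- Schur test. -/
theorem schur_sq {n : Type*} [Fintype n] (M : Matrix n n ℝ) (R C : ℝ) (hR : 0 ≤ R)
    (h0 : ∀ i j, 0 ≤ M i j) (hr : ∀ i, ∑ j, M i j ≤ R) (hc : ∀ j, ∑ i, M i j ≤ C) (V : n → ℝ) :
    ∑ i, (M.mulVec V i)^2 ≤ R * C * ∑ i, (V i)^2 := by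
  have h1 : ∀ i, (M.mulVec V i)^2 ≤ R * ∑ j, M i j * (V j)^2 := by
    intro i
    have h2 : (M.mulVec V i)^2 ≤ (∑ j, M i j) * ∑ j, M i j * (V j)^2 := by
      apply Finset.sum_sq_le_sum_mul_sum_of_sq_eq_mul
      · intro j _; exact h0 i j
      · intro j _; exact mul_nonneg (h0 i j) (sq_nonneg _)
      · intro j _; ring
    exact h2.trans (mul_le_mul_of_nonneg_right (hr i)
      (Finset.sum_nonneg fun j _ => mul_nonneg (h0 i j) (sq_nonneg _)))
  calc ∑ i, (M.mulVec V i)^2 ≤ ∑ i, R * ∑ j, M i j * (V j)^2 := Finset.sum_le_sum fun i _ => h1 i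
    _ = R * ∑ j, (∑ i, M i j) * (V j)^2 := by
      rw [← Finset.mul_sum, Finset.sum_comm]
      simp only [Finset.sum_mul]
    _ ≤ R * ∑ j, C * (V j)^2 := by
      apply mul_le_mul_of_nonneg_left _ hR
      exact Finset.sum_le_sum fun j _ => mul_le_mul_of_nonneg_right (hc j) (sq_nonneg _)
    _ = _ := by rw [← Finset.mul_sum]; ring

theorem piece_bounds (f : ℝ → ℝ) (hf0 : ∀ ξ : ℝ, 0 ≤ f ξ) (hfi : Integrable f)
    (S : ℝ) (hS : ∀ ξ, f ξ ≤ S) (y₀ Δy : ℝ) (hΔy : 0 < Δy) (j l : ℕ) (y : ℕ → ℝ)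
    (hy : y = fun k : ℕ => y₀ + k * Δy) :
    (0 ≤ (y (l+1) * F0 y f j l - F1 y f j l) / Δy ∧
      (y (l+1) * F0 y f j l - F1 y f j l) / Δy ≤ S * Δy / 2) ∧
    (0 ≤ (F1 y f j l - y l * F0 y f j l) / Δy ∧
      (F1 y f j l - y l * F0 y f j l) / Δy ≤ S * Δy / 2) := by
  have hd : y (l+1) = y l + Δy := by subst hy; push_cast; ring
  have hle : y l ≤ y (l+1) := by linarith
  have hi : Integrable (fun ξ => f (ξ - y j)) := hfi.comp_sub_right (y j)
  have hi0 : IntervalIntegrable (fun ξ => f (ξ - y j)) volume (y l) (y (l+1)) :=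
    hi.intervalIntegrable
  have hi1 : IntervalIntegrable (fun ξ => ξ * f (ξ - y j)) volume (y l) (y (l+1)) :=
    hi0.continuousOn_mul continuousOn_id
  have ea : y (l+1) * F0 y f j l - F1 y f j l
      = ∫ ξ in (y l)..(y (l+1)), (y (l+1) - ξ) * f (ξ - y j) := by
    unfold F0 F1
    rw [← intervalIntegral.integral_const_mul, ← intervalIntegral.integral_sub (hi0.const_mul _) hi1]
    congr 1; ext ξ; ring
  have eb : F1 y f j l - y l * F0 y f j l
      = ∫ ξ in (y l)..(y (l+1)), (ξ - y l) * f (ξ - y j) := by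
    unfold F0 F1
    rw [← intervalIntegral.integral_const_mul, ← intervalIntegral.integral_sub hi1 (hi0.const_mul _)]
    congr 1; ext ξ; ring
  have ia : ∫ ξ in (y l)..(y (l+1)), (y (l+1) - ξ) * S = S * Δy / 2 * Δy := by
    rw [intervalIntegral.integral_mul_const, intervalIntegral.integral_sub (by simp) (by simp)]
    simp only [intervalIntegral.integral_const, integral_id, smul_eq_mul, hd]
    ring
  have ib : ∫ ξ in (y l)..(y (l+1)), (ξ - y l) * S = S * Δy / 2 * Δy := by
    rw [intervalIntegral.integral_mul_const, intervalIntegral.integral_sub (by simp) (by simp)]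
    simp only [intervalIntegral.integral_const, integral_id, smul_eq_mul, hd]
    ring
  refine ⟨⟨?_, ?_⟩, ⟨?_, ?_⟩⟩
  · apply div_nonneg _ hΔy.le
    rw [ea]
    exact intervalIntegral.integral_nonneg hle fun x hx =>
      mul_nonneg (by linarith [hx.2]) (hf0 _)
  · rw [div_le_iff₀ hΔy, ea, ← ia]
    apply intervalIntegral.integral_mono_on hle
    · exact hi0.continuousOn_mul (by fun_prop)
    · exact Continuous.intervalIntegrable (by fun_prop) _ _
    · intro x hx
      exact mul_le_mul_of_nonneg_left (hS _) (by linarith [hx.2])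
  · apply div_nonneg _ hΔy.le
    rw [eb]
    exact intervalIntegral.integral_nonneg hle fun x hx =>
      mul_nonneg (by linarith [hx.1]) (hf0 _)
  · rw [div_le_iff₀ hΔy, eb, ← ib]
    apply intervalIntegral.integral_mono_on hle
    · exact hi0.continuousOn_mul (by fun_prop)
    · exact Continuous.intervalIntegrable (by fun_prop) _ _
    · intro x hx
      exact mul_le_mul_of_nonneg_left (hS _) (by linarith [hx.1])

theorem Btilde_split (m₂ : ℕ) (hm₂ : 1 ≤ m₂) (y : ℕ → ℝ) (Δy : ℝ) (f : ℝ → ℝ)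
    (j l : Fin (m₂+1)) :
    Btilde m₂ y Δy f j l =
      (if l.val = m₂ then 0 else (y (l.val+1) * F0 y f j.val l.val - F1 y f j.val l.val) / Δy)
      + (if l.val = 0 then 0 else
        (F1 y f j.val (l.val-1) - y (l.val-1) * F0 y f j.val (l.val-1)) / Δy) := by
  unfold Btilde
  simp only [Matrix.of_apply]
  by_cases h0 : l.val = 0
  · have : l.val ≠ m₂ := by omega
    have h3 : (0:ℕ) ≠ m₂ := by omega
    simp [h0, h3]
  · by_cases h1 : l.val = m₂
    · have h3 : m₂ ≠ 0 := by omega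
      simp [h1, h3]
    · simp [h0, h1]; ring

theorem row_sum (f : ℝ → ℝ) (hf0 : ∀ ξ : ℝ, 0 ≤ f ξ) (hfi : Integrable f)
    (hf1 : (∫ ξ : ℝ, f ξ) = 1)
    (m₂ : ℕ) (hm₂ : 1 ≤ m₂) (y₀ Δy : ℝ) (hΔy : 0 < Δy) (y : ℕ → ℝ)
    (hy : y = fun k : ℕ => y₀ + k * Δy) (j : Fin (m₂+1)) :
    ∑ l, Btilde m₂ y Δy f j l ≤ 1 := by
  have hi : Integrable (fun ξ => f (ξ - y j)) := hfi.comp_sub_right (y j)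
  have e : ∑ l, Btilde m₂ y Δy f j l = ∑ l : Fin m₂, F0 y f j l := by
    simp only [Btilde_split m₂ hm₂]
    rw [Finset.sum_add_distrib, Fin.sum_univ_castSucc, Fin.sum_univ_succ (n := m₂)
      (f := fun l => if l.val = 0 then 0 else
        (F1 y f j.val (l.val-1) - y (l.val-1) * F0 y f j.val (l.val-1)) / Δy)]
    simp only [Fin.val_last, if_true, Fin.val_zero, Fin.val_castSucc, Fin.val_succ, add_zero, zero_add,
      Nat.add_sub_cancel, Nat.succ_ne_zero, if_false]
    rw [← Finset.sum_add_distrib]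
    apply Finset.sum_congr rfl
    intro l _
    rw [if_neg l.isLt.ne]
    have hd : y (l+1) = y l + Δy := by subst hy; push_cast; ring
    rw [hd]; field_simp; ring
  have hle : y 0 ≤ y m₂ := by subst hy; simp; positivity
  rw [e, Fin.sum_univ_eq_sum_range (fun l => F0 y f j l) m₂]
  unfold F0
  rw [intervalIntegral.sum_integral_adjacent_intervals (fun k _ => hi.intervalIntegrable),
    intervalIntegral.integral_of_le hle]
  calc _ ≤ ∫ ξ, f (ξ - y j) :=
        setIntegral_le_integral hi (Filter.Eventually.of_forall fun x => hf0 _)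
    _ = 1 := by rw [integral_sub_right_eq_self f (y j), hf1]

/-- For any λ > 0 and any m₁ ≥ 0, the jump matrix B = I_{m₁+1} ⊗ (λB̃)
satisfies ‖B‖₂ ≤ λ√(L_y‖f‖_∞); in particular μ₂[B] ≤ λ√(L_y‖f‖_∞), where
L_y = (m₂+2)Δy and ‖f‖_∞ = sup_ξ f(ξ). -/
theorem jump_matrix_l2_bound
    (f : ℝ → ℝ) (hf0 : ∀ ξ : ℝ, 0 ≤ f ξ) (hfi : Integrable f)
    (hfb : BddAbove (Set.range f)) (hf1 : (∫ ξ : ℝ, f ξ) = 1)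
    (m₂ : ℕ) (hm₂ : 1 ≤ m₂) (y₀ Δy : ℝ) (hΔy : 0 < Δy)
    (m₁ : ℕ) (lam : ℝ) (hlam : 0 < lam) :
    let y : ℕ → ℝ := fun k => y₀ + k * Δy
    let Ly : ℝ := (m₂ + 2) * Δy
    let fsup : ℝ := ⨆ ξ : ℝ, f ξ
    let B : Matrix (Fin (m₁+1) × Fin (m₂+1)) (Fin (m₁+1) × Fin (m₂+1)) ℝ :=
      Matrix.kroneckerMap (· * ·)
        (1 : Matrix (Fin (m₁+1)) (Fin (m₁+1)) ℝ) (lam • Btilde m₂ y Δy f)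
    (∀ V : Fin (m₁+1) × Fin (m₂+1) → ℝ,
      l2norm (B.mulVec V) ≤ lam * Real.sqrt (Ly * fsup) * l2norm V) ∧
    (∀ V : Fin (m₁+1) × Fin (m₂+1) → ℝ,
      (B.mulVec V) ⬝ᵥ V ≤ lam * Real.sqrt (Ly * fsup) * (V ⬝ᵥ V)) := by
  intro y Ly fsup B
  have hS : ∀ ξ, f ξ ≤ fsup := fun ξ => le_ciSup hfb ξ
  have hS0 : 0 ≤ fsup := (hf0 0).trans (hS 0)
  have hp := fun j l => piece_bounds f hf0 hfi fsup hS y₀ Δy hΔy j l y rfl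
  have hb : ∀ j l, 0 ≤ Btilde m₂ y Δy f j l ∧ Btilde m₂ y Δy f j l ≤ fsup * Δy := by
    intro j l
    rw [Btilde_split m₂ hm₂]
    have h1 := hp j l
    have h2 := hp j (l-1)
    have h3 : 0 ≤ fsup * Δy := by positivity
    split_ifs with ha hb hb
    · constructor <;> linarith
    · have e : l.val - 1 + 1 = l.val := by omega
      constructor <;> linarith [h2.2.1, h2.2.2]
    · constructor <;> linarith [h1.1.1, h1.1.2]
    · constructor <;> linarith [h1.1.1, h1.1.2, h2.2.1, h2.2.2]
  have hrow := row_sum f hf0 hfi hf1 m₂ hm₂ y₀ Δy hΔy y rfl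
  have hcol : ∀ l, ∑ j, Btilde m₂ y Δy f j l ≤ Ly * fsup := by
    intro l
    calc _ ≤ ∑ j : Fin (m₂+1), fsup * Δy := Finset.sum_le_sum fun j _ => (hb j l).2
      _ = (m₂ + 1) * (fsup * Δy) := by simp
      _ ≤ Ly * fsup := by
        have h3 : 0 ≤ fsup * Δy := by positivity
        simp only [Ly]; nlinarith
  have hB : ∀ p q, B p q = if p.1 = q.1 then lam * Btilde m₂ y Δy f p.2 q.2 else 0 := by
    intro p q
    simp [B, Matrix.kroneckerMap_apply, Matrix.one_apply]
  have hL : 0 ≤ Ly * fsup := by positivity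
  have key : ∀ V, ∑ i, (B.mulVec V i)^2 ≤ lam * (lam * (Ly * fsup)) * ∑ i, (V i)^2 := by
    apply schur_sq B _ _ hlam.le
    · intro p q
      rw [hB]; split_ifs
      · exact mul_nonneg hlam.le (hb _ _).1
      · exact le_rfl
    · intro p
      simp only [hB, Fintype.sum_prod_type]
      rw [Finset.sum_comm]
      simp only [Finset.sum_ite_eq, Finset.mem_univ, if_true]
      rw [← Finset.mul_sum]
      nlinarith [hrow p.2]
    · intro p
      simp only [hB, Fintype.sum_prod_type]
      rw [Finset.sum_comm]
      simp only [Finset.sum_ite_eq', Finset.mem_univ, if_true]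
      rw [← Finset.mul_sum]
      exact mul_le_mul_of_nonneg_left (hcol p.2) hlam.le
  have main : ∀ V, l2norm (B.mulVec V) ≤ lam * Real.sqrt (Ly * fsup) * l2norm V := by
    intro V
    unfold l2norm
    apply Real.sqrt_le_iff.2
    refine ⟨by positivity, (key V).trans (le_of_eq ?_)⟩
    rw [mul_pow, mul_pow, Real.sq_sqrt hL, Real.sq_sqrt (Finset.sum_nonneg fun i _ => sq_nonneg _)]
    ring
  refine ⟨main, fun V => ?_⟩
  have hVV : V ⬝ᵥ V = l2norm V * l2norm V := by
    unfold l2norm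
    rw [Real.mul_self_sqrt (Finset.sum_nonneg fun i _ => sq_nonneg _)]
    simp [dotProduct, sq]
  have hcs : (B.mulVec V) ⬝ᵥ V ≤ l2norm (B.mulVec V) * l2norm V :=
    Real.sum_mul_le_sqrt_mul_sqrt _ _ _
  rw [hVV, ← mul_assoc]
  exact hcs.trans (mul_le_mul_of_nonneg_right (main V) (Real.sqrt_nonneg _))
end

section
/- The entries of B̃ satisfy |B̃_{j,ℓ}| ≤ Δy·‖f‖_∞ for all 0 ≤ j ≤ m₂ and 1 ≤ ℓ ≤ m₂−1, and |B̃_{j,0}| ≤ (1/2)Δy·‖f‖_∞ and |B̃_{j,m₂}| ≤ (1/2)Δy·‖f‖_∞ for all 0 ≤ j ≤ m₂. Consequently every column sum satisfies Σ_{j=0}^{m₂} |B̃_{j,ℓ}| ≤ L_y·‖f‖_∞ for 0 ≤ ℓ ≤ m₂, i.e. ‖B̃‖₁ ≤ L_y·‖f‖_∞, where ‖·‖₁ denotes the maximum-column-sum matrix norm. -/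
open MeasureTheory

lemma aux_left (g : ℝ → ℝ) (M a b h : ℝ) (hg0 : ∀ x, 0 ≤ g x) (hgM : ∀ x, g x ≤ M)
    (hgi : Integrable g) (hh : 0 < h) (hb : b = a + h) :
    |((∫ x in a..b, x * g x) - a * ∫ x in a..b, g x) / h| ≤ (1/2) * h * M := by
  have hab : a ≤ b := by linarith
  have hi : IntervalIntegrable g volume a b := hgi.intervalIntegrable
  have hi1 : IntervalIntegrable (fun x => x * g x) volume a b :=
    hi.continuousOn_mul continuousOn_id
  have e : (∫ x in a..b, x * g x) - a * ∫ x in a..b, g x = ∫ x in a..b, (x - a) * g x := by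
    rw [← intervalIntegral.integral_const_mul, ← intervalIntegral.integral_sub hi1 (hi.const_mul a)]
    congr 1; ext x; ring
  have hi2 : IntervalIntegrable (fun x => (x - a) * g x) volume a b :=
    hi.continuousOn_mul (by fun_prop)
  have h0 : 0 ≤ ∫ x in a..b, (x - a) * g x :=
    intervalIntegral.integral_nonneg hab fun x hx => mul_nonneg (by linarith [hx.1]) (hg0 x)
  have h1 : ∫ x in a..b, (x - a) * g x ≤ ∫ x in a..b, (x - a) * M :=
    intervalIntegral.integral_mono_on hab hi2 (Continuous.intervalIntegrable (by fun_prop) _ _)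
      fun x hx => mul_le_mul_of_nonneg_left (hgM x) (by linarith [hx.1])
  have h2 : ∫ x in a..b, (x - a) * M = h ^ 2 / 2 * M := by
    rw [intervalIntegral.integral_mul_const, intervalIntegral.integral_sub (by simp) (by simp)]
    simp only [integral_id, intervalIntegral.integral_const, smul_eq_mul]
    subst hb; ring
  rw [e, abs_of_nonneg (div_nonneg h0 hh.le), div_le_iff₀ hh]
  linarith

lemma aux_right (g : ℝ → ℝ) (M a b h : ℝ) (hg0 : ∀ x, 0 ≤ g x) (hgM : ∀ x, g x ≤ M)
    (hgi : Integrable g) (hh : 0 < h) (hb : b = a + h) :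
    |(b * (∫ x in a..b, g x) - ∫ x in a..b, x * g x) / h| ≤ (1/2) * h * M := by
  have hab : a ≤ b := by linarith
  have hi : IntervalIntegrable g volume a b := hgi.intervalIntegrable
  have hi1 : IntervalIntegrable (fun x => x * g x) volume a b :=
    hi.continuousOn_mul continuousOn_id
  have e : b * (∫ x in a..b, g x) - (∫ x in a..b, x * g x) = ∫ x in a..b, (b - x) * g x := by
    rw [← intervalIntegral.integral_const_mul, ← intervalIntegral.integral_sub (hi.const_mul b) hi1]
    congr 1; ext x; ring
  have hi2 : IntervalIntegrable (fun x => (b - x) * g x) volume a b :=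
    hi.continuousOn_mul (by fun_prop)
  have h0 : 0 ≤ ∫ x in a..b, (b - x) * g x :=
    intervalIntegral.integral_nonneg hab fun x hx => mul_nonneg (by linarith [hx.2]) (hg0 x)
  have h1 : ∫ x in a..b, (b - x) * g x ≤ ∫ x in a..b, (b - x) * M :=
    intervalIntegral.integral_mono_on hab hi2 (Continuous.intervalIntegrable (by fun_prop) _ _)
      fun x hx => mul_le_mul_of_nonneg_left (hgM x) (by linarith [hx.2])
  have h2 : ∫ x in a..b, (b - x) * M = h ^ 2 / 2 * M := by
    rw [intervalIntegral.integral_mul_const, intervalIntegral.integral_sub (by simp) (by simp)]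
    simp only [integral_id, intervalIntegral.integral_const, smul_eq_mul]
    subst hb; ring
  rw [e, abs_of_nonneg (div_nonneg h0 hh.le), div_le_iff₀ hh]
  linarith

/-- The entries of B̃ satisfy |B̃_{j,ℓ}| ≤ Δy‖f‖_∞ for 1 ≤ ℓ ≤ m₂−1
and |B̃_{j,0}|, |B̃_{j,m₂}| ≤ (1/2)Δy‖f‖_∞, for all 0 ≤ j ≤ m₂.  Consequently every
column sum satisfies Σ_j |B̃_{j,ℓ}| ≤ L_y‖f‖_∞, i.e. ‖B̃‖₁ ≤ L_y‖f‖_∞ in the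
maximum-column-sum norm. -/
theorem jump_matrix_column_sums
    (f : ℝ → ℝ) (hf0 : ∀ ξ : ℝ, 0 ≤ f ξ) (hfi : Integrable f)
    (hfb : BddAbove (Set.range f)) (hf1 : (∫ ξ : ℝ, f ξ) = 1)
    (m₂ : ℕ) (hm₂ : 1 ≤ m₂) (y₀ Δy : ℝ) (hΔy : 0 < Δy) :
    let y : ℕ → ℝ := fun k => y₀ + k * Δy
    let Ly : ℝ := (m₂ + 2) * Δy
    let fsup : ℝ := ⨆ ξ : ℝ, f ξ
    let B := Btilde m₂ y Δy f
    (∀ j ℓ : Fin (m₂+1), 1 ≤ ℓ.val → ℓ.val ≤ m₂ - 1 → |B j ℓ| ≤ Δy * fsup) ∧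
    (∀ j : Fin (m₂+1), |B j ⟨0, Nat.succ_pos m₂⟩| ≤ (1/2) * Δy * fsup) ∧
    (∀ j : Fin (m₂+1), |B j ⟨m₂, Nat.lt_succ_self m₂⟩| ≤ (1/2) * Δy * fsup) ∧
    (∀ ℓ : Fin (m₂+1), ∑ j : Fin (m₂+1), |B j ℓ| ≤ Ly * fsup) ∧
    (⨆ ℓ : Fin (m₂+1), ∑ j : Fin (m₂+1), |B j ℓ|) ≤ Ly * fsup := by
  intro y Ly fsup B
  have hM : ∀ x, f x ≤ fsup := fun x => le_ciSup hfb x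
  have hM0 : 0 ≤ fsup := (hf0 0).trans (hM 0)
  have hy : ∀ k, y (k+1) = y k + Δy := fun k => by simp only [y]; push_cast; ring
  have hL : ∀ j k, |(F1 y f j k - y k * F0 y f j k) / Δy| ≤ (1/2) * Δy * fsup := fun j k =>
    aux_left (fun x => f (x - y j)) fsup _ _ Δy (fun x => hf0 _) (fun x => hM _)
      (hfi.comp_sub_right (y j)) hΔy (hy k)
  have hR : ∀ j k, |(y (k+1) * F0 y f j k - F1 y f j k) / Δy| ≤ (1/2) * Δy * fsup := fun j k =>
    aux_right (fun x => f (x - y j)) fsup _ _ Δy (fun x => hf0 _) (fun x => hM _)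
      (hfi.comp_sub_right (y j)) hΔy (hy k)
  have hpos : 0 ≤ Δy * fsup := mul_nonneg hΔy.le hM0
  have c1 : ∀ j ℓ : Fin (m₂+1), 1 ≤ ℓ.val → ℓ.val ≤ m₂ - 1 → |B j ℓ| ≤ Δy * fsup := by
    intro j ℓ h1 h2
    simp only [B, Btilde, Matrix.of_apply]
    rw [if_neg (by omega), if_neg (by omega)]
    refine (abs_add_le _ _).trans ?_
    linarith [hL j (ℓ.val - 1), hR j ℓ.val]
  have c2 : ∀ j : Fin (m₂+1), |B j ⟨0, Nat.succ_pos m₂⟩| ≤ (1/2) * Δy * fsup := by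
    intro j
    simp only [B, Btilde, Matrix.of_apply, if_true]
    exact hR j 0
  have c3 : ∀ j : Fin (m₂+1), |B j ⟨m₂, Nat.lt_succ_self m₂⟩| ≤ (1/2) * Δy * fsup := by
    intro j
    simp only [B, Btilde, Matrix.of_apply]
    rw [if_neg (by omega), if_pos trivial]
    exact hL j (m₂ - 1)
  have c0 : ∀ j ℓ : Fin (m₂+1), |B j ℓ| ≤ Δy * fsup := by
    intro j ℓ
    by_cases h0 : ℓ.val = 0
    · have : ℓ = ⟨0, Nat.succ_pos m₂⟩ := Fin.ext h0
      rw [this]; linarith [c2 j]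
    by_cases h1 : ℓ.val = m₂
    · have : ℓ = ⟨m₂, Nat.lt_succ_self m₂⟩ := Fin.ext h1
      rw [this]; linarith [c3 j]
    exact c1 j ℓ (by omega) (by omega)
  have c4 : ∀ ℓ : Fin (m₂+1), ∑ j : Fin (m₂+1), |B j ℓ| ≤ Ly * fsup := by
    intro ℓ
    refine (Finset.sum_le_sum fun j _ => c0 j ℓ).trans ?_
    simp only [Finset.sum_const, Finset.card_univ, Fintype.card_fin, nsmul_eq_mul, Ly]
    push_cast
    linarith
  exact ⟨c1, c2, c3, c4, ciSup_le c4⟩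
end

section
/- For every vector V ∈ ℝ^{m+1} one has ⟨MV,V⟩ ≤ (|w₋₁| − 10w₂)·b̃·⟨V,V⟩; equivalently, the logarithmic ℓ2-norm satisfies μ₂[M] ≤ (|w₋₁| − 10w₂)·b̃. -/
open Matrix

/-- Extension of a vector on {0,…,m} to ℤ by zero (homogeneous Dirichlet
boundary conditions). -/
def extZ (m : ℕ) (V : Fin (m+1) → ℝ) (k : ℤ) : ℝ :=
  if h : 0 ≤ k ∧ k ≤ (m : ℤ) then V ⟨k.toNat, by omega⟩ else 0

/-- The action of the upwind convection matrix M: row i is the upwind stencil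
(w₂, w₁, w₀, w₋₁)/Δx multiplied by g_i, the stencil direction depending on the
sign of g_i, with values outside {0,…,m} taken equal to zero. -/
noncomputable def Mact (m : ℕ) (Δx : ℝ) (g : ℕ → ℝ) (wm1 w0 w1 w2 : ℝ)
    (V : Fin (m+1) → ℝ) : Fin (m+1) → ℝ := fun i =>
  if 0 < g i.val then
    (g i.val / Δx) * (w2 * extZ m V ((i.val : ℤ) + 2) + w1 * extZ m V ((i.val : ℤ) + 1)
      + w0 * V i + wm1 * extZ m V ((i.val : ℤ) - 1))
  else if g i.val < 0 then
    (g i.val / Δx) * (-wm1 * extZ m V ((i.val : ℤ) + 1) - w0 * V i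
      - w1 * extZ m V ((i.val : ℤ) - 1) - w2 * extZ m V ((i.val : ℤ) - 2))
  else 0

lemma uc_side (c K : ℝ) (hc : 0 ≤ c) (hK1 : 1/2 - 3*c ≤ K) (hK2 : -(1/2 - 3*c) ≤ K)
    (v : ℕ → ℝ) (n : ℕ) :
    ∑ k ∈ Finset.range n, ((k:ℝ)+1) * ((-c) * v k + (1/2+3*c) * v (k+1) + (-3*c) * v (k+2)
        + (c-1/2) * v (k+3)) * v (k+2)
      + ((1/2-c)*n*v (n+2)*v (n+1) - 2*c*(n+1)*v (n+1) * v n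
        + (3*c+5/2*c*n) * v (n+1)^2 + c*(n+1)/2 * v n^2 + K/2 * v (n+1)^2)
    ≤ (3*c+K) * ∑ k ∈ Finset.range n, v (k+2)^2
      + (3*c*v 1^2 + c/2*v 0^2 - 2*c*v 0 * v 1 + K/2 * v 1^2) := by
  induction n with
  | zero => simp; linarith
  | succ n ih =>
    rw [Finset.sum_range_succ, Finset.sum_range_succ]
    push_cast
    simp only [show n+1+2 = n+3 from rfl, show n+1+1 = n+2 from rfl]
    have h1 : 0 ≤ c/2*((n:ℝ)+1)*(v (n+2) - 2*v (n+1) + v n)^2 := by positivity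
    have h2 : (1/2-3*c) * (v (n+2) * v (n+1)) ≤ K/2*(v (n+2)^2 + v (n+1)^2) := by
      nlinarith [mul_nonneg (sub_nonneg.2 hK1) (sq_nonneg (v (n+2) + v (n+1))),
        mul_nonneg (sub_nonneg.2 hK2) (sq_nonneg (v (n+2) - v (n+1)))]
    nlinarith [ih, h1, h2]

lemma uc_final (c K A Sv Sw Tv Tw y p q : ℝ) (hc : 0 ≤ c) (hKA : K ≤ A + 2*c)
    (bv : p^2 ≤ Sv) (bw : q^2 ≤ Sw)
    (sv : Tv ≤ (3*c+K) * Sv + (3*c*y^2 + c/2*q^2 - 2*c*q*y + K/2*y^2))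
    (sw : Tw ≤ (3*c+K) * Sw + (3*c*y^2 + c/2*p^2 - 2*c*p*y + K/2*y^2)) :
    Tv + Tw ≤ (A + 10*c) * (y^2 + Sv + Sw) := by
  have hSv : 0 ≤ Sv := (sq_nonneg _).trans bv
  have hSw : 0 ≤ Sw := (sq_nonneg _).trans bw
  have k1 : 0 ≤ (A + 2*c - K) * (y^2 + Sv + Sw) :=
    mul_nonneg (by linarith) (by positivity)
  have k2 : 0 ≤ c * (Sv - p^2) := mul_nonneg hc (by linarith)
  have k3 : 0 ≤ c * (Sw - q^2) := mul_nonneg hc (by linarith)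
  have k4 : 0 ≤ c * (y + p)^2 := by positivity
  have k5 : 0 ≤ c * (y + q)^2 := by positivity
  have k6 : 0 ≤ c * Sv := by positivity
  have k7 : 0 ≤ c * Sw := by positivity
  linarith only [sv, sw, k1, k2, k3, k4, k5, k6, k7]

lemma uc_split (m i₀ N : ℕ) (h : i₀ ≤ m) (hN : m ≤ N) (F : ℤ → ℝ)
    (hF : ∀ z : ℤ, (z < 0 ∨ (m:ℤ) < z) → F z = 0) :
    ∑ i : Fin (m+1), F (i.val : ℤ) = F i₀ + ∑ k ∈ Finset.range N, F ((i₀:ℤ) - 1 - k)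
      + ∑ k ∈ Finset.range N, F ((i₀:ℤ) + 1 + k) := by
  rw [Fin.sum_univ_eq_sum_range (fun i => F (i:ℤ)) (m+1)]
  obtain ⟨d, rfl⟩ := Nat.exists_eq_add_of_le h
  have e1 : ∑ k ∈ Finset.range N, F ((i₀:ℤ) - 1 - k) = ∑ k ∈ Finset.range i₀, F (k:ℤ) := by
    rw [← Finset.sum_range_reflect (fun k => F (k:ℤ)) i₀]
    obtain ⟨r, rfl⟩ := Nat.exists_eq_add_of_le (h.trans hN)
    rw [Finset.sum_range_add]
    have : ∑ x ∈ Finset.range r, F ((i₀:ℤ) - 1 - ((i₀ + x : ℕ):ℤ)) = 0 :=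
      Finset.sum_eq_zero fun x _ => hF _ (Or.inl (by push_cast; omega))
    rw [this, add_zero]
    refine Finset.sum_congr rfl fun k hk => ?_
    have := Finset.mem_range.1 hk
    congr 1
    omega
  have e2 : ∑ k ∈ Finset.range N, F ((i₀:ℤ) + 1 + k)
      = ∑ k ∈ Finset.range d, F ((i₀:ℤ) + 1 + k) := by
    obtain ⟨r, rfl⟩ := Nat.exists_eq_add_of_le (show d ≤ N by omega)
    rw [Finset.sum_range_add]
    have : ∑ x ∈ Finset.range r, F ((i₀:ℤ) + 1 + ((d + x : ℕ):ℤ)) = 0 :=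
      Finset.sum_eq_zero fun x _ => hF _ (Or.inr (by push_cast; omega))
    rw [this, add_zero]
  rw [e1, e2, show i₀ + d + 1 = (i₀ + 1) + d by omega, Finset.sum_range_add,
    Finset.sum_range_succ]
  push_cast
  ring

lemma uc_ext_out (m : ℕ) (V : Fin (m+1) → ℝ) (z : ℤ) (h : z < 0 ∨ (m:ℤ) < z) :
    extZ m V z = 0 := by
  unfold extZ
  rw [dif_neg]
  omega

lemma uc_ext_in (m : ℕ) (V : Fin (m+1) → ℝ) (i : Fin (m+1)) :
    extZ m V (i.val : ℤ) = V i := by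
  unfold extZ
  rw [dif_pos ⟨by omega, by have := i.2; omega⟩]
  simp

/-- For every vector V ∈ ℝ^{m+1} one has
⟨MV,V⟩ ≤ (|w₋₁| − 10w₂)·b̃·⟨V,V⟩; equivalently μ₂[M] ≤ (|w₋₁| − 10w₂)·b̃. -/
theorem upwind_convection_log_norm_bound
    (wm1 w0 w1 w2 : ℝ)
    (hw1 : wm1 + w0 + w1 + w2 = 0)
    (hw2 : -wm1 + w1 + 2*w2 = 1)
    (hw3 : wm1 + w1 + 4*w2 = 0)
    (hw4 : w2 ≤ 0)
    (m : ℕ) (hm : 4 ≤ m) (Δx : ℝ) (hΔx : 0 < Δx) (x₀ : ℝ)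
    (atil btil : ℝ) (hbtil : 0 < btil)
    (i₀ : ℕ) (hi₀l : 2 ≤ i₀) (hi₀u : i₀ ≤ m - 2)
    (hg : atil - btil * (x₀ + i₀ * Δx) = 0) :
    ∀ V : Fin (m+1) → ℝ,
      (Mact m Δx (fun i => atil - btil * (x₀ + i * Δx)) wm1 w0 w1 w2 V) ⬝ᵥ V
        ≤ (|wm1| - 10*w2) * btil * (V ⬝ᵥ V) := by
  intro V
  obtain ⟨c, rfl⟩ : ∃ c, w2 = -c := ⟨-w2, by ring⟩
  have hc : 0 ≤ c := by linarith
  obtain rfl : wm1 = c - 1/2 := by linarith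
  obtain rfl : w1 = 1/2 + 3*c := by linarith
  obtain rfl : w0 = -3*c := by linarith
  obtain rfl : atil = btil * (x₀ + i₀ * Δx) := by linarith
  set f := extZ m V with hf
  let L : ℤ → ℝ := fun z => (-c) * f (z+2) + (1/2+3*c) * f (z+1) + (-3*c) * f z
    + (c-1/2) * f (z-1)
  let R : ℤ → ℝ := fun z => (-c) * f (z-2) + (1/2+3*c) * f (z-1) + (-3*c) * f z
    + (c-1/2) * f (z+1)
  let F : ℤ → ℝ := fun z =>
    if z < i₀ then ((i₀:ℝ) - z) * L z * f z else ((z:ℝ) - i₀) * R z * f z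
  have hF0 : ∀ z : ℤ, (z < 0 ∨ (m:ℤ) < z) → F z = 0 := by
    intro z hz
    have : f z = 0 := uc_ext_out m V z hz
    simp [F, this]
  have hS0 : ∀ z : ℤ, (z < 0 ∨ (m:ℤ) < z) → f z ^ 2 = 0 := by
    intro z hz
    have : f z = 0 := uc_ext_out m V z hz
    simp [this]
  have hMV : (Mact m Δx (fun i => btil * (x₀ + i₀ * Δx) - btil * (x₀ + i * Δx))
      (c-1/2) (-3*c) (1/2+3*c) (-c) V) ⬝ᵥ V = btil * ∑ i : Fin (m+1), F (i.val : ℤ) := by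
    rw [dotProduct, Finset.mul_sum]
    refine Finset.sum_congr rfl fun i _ => ?_
    have hbd : 0 < btil * Δx := mul_pos hbtil hΔx
    have hgi : btil * (x₀ + i₀ * Δx) - btil * (x₀ + (i.val:ℝ) * Δx)
        = btil * Δx * ((i₀:ℝ) - i.val) := by ring
    have hdiv : btil * Δx * ((i₀:ℝ) - i.val) / Δx = btil * ((i₀:ℝ) - i.val) := by
      field_simp
    have hfi : f (i.val : ℤ) = V i := uc_ext_in m V i
    simp only [Mact, hgi, hdiv, ← hf]
    rcases lt_trichotomy i.val i₀ with h | h | h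
    · have h' : (i.val : ℝ) < i₀ := by exact_mod_cast h
      rw [if_pos (mul_pos hbd (by linarith))]
      simp only [F, L]
      rw [if_pos (by exact_mod_cast h), hfi]
      push_cast
      ring
    · have h' : (i.val : ℝ) = i₀ := by exact_mod_cast h
      have h2 : ¬ ((i.val : ℤ) < i₀) := by omega
      simp [F, h', h2]
    · have h' : (i₀ : ℝ) < i.val := by exact_mod_cast h
      have h3 : btil * Δx * ((i₀:ℝ) - i.val) < 0 := mul_neg_of_pos_of_neg hbd (by linarith)
      rw [if_neg (not_lt.2 h3.le), if_pos h3]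
      simp only [F, R]
      rw [if_neg (by omega), hfi]
      push_cast
      ring
  have hVV : V ⬝ᵥ V = ∑ i : Fin (m+1), f (i.val : ℤ) ^ 2 := by
    rw [dotProduct]
    refine Finset.sum_congr rfl fun i _ => ?_
    rw [show f (i.val : ℤ) = V i from uc_ext_in m V i]
    ring
  rw [hMV, hVV, uc_split m i₀ (m+1) (by omega) (by omega) F hF0,
    uc_split m i₀ (m+1) (by omega) (by omega) (fun z => f z ^ 2) hS0]
  let v : ℕ → ℝ := fun k => f ((i₀:ℤ) + 1 - k)
  let w : ℕ → ℝ := fun k => f ((i₀:ℤ) - 1 + k)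
  have hv0 : ∀ k, m + 1 ≤ k → v k = 0 ∨ k < i₀ + 2 := by
    intro k hk
    by_cases h : k < i₀ + 2
    · exact Or.inr h
    · exact Or.inl (uc_ext_out m V _ (Or.inl (by omega)))
  have hv1 : v (m+1) = 0 := (hv0 _ le_rfl).resolve_right (by omega)
  have hv2 : v (m+1+1) = 0 := (hv0 _ (by omega)).resolve_right (by omega)
  have hw1 : w (m+1) = 0 := uc_ext_out m V _ (Or.inr (by push_cast; omega))
  have hw2 : w (m+1+1) = 0 := uc_ext_out m V _ (Or.inr (by push_cast; omega))
  set K := |1/2 - 3*c| with hK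
  have sv := uc_side c K hc (le_abs_self _) (neg_le_abs _) v (m+1)
  have sw := uc_side c K hc (le_abs_self _) (neg_le_abs _) w (m+1)
  rw [hv1, hv2] at sv
  rw [hw1, hw2] at sw
  have eL : ∑ k ∈ Finset.range (m+1), F ((i₀:ℤ) - 1 - k)
      = ∑ k ∈ Finset.range (m+1), ((k:ℝ)+1) * ((-c) * v k + (1/2+3*c) * v (k+1)
        + (-3*c) * v (k+2) + (c-1/2) * v (k+3)) * v (k+2) := by
    refine Finset.sum_congr rfl fun k _ => ?_
    simp only [F, L, v]
    rw [if_pos (by omega)]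
    push_cast
    ring_nf
  have eR : ∑ k ∈ Finset.range (m+1), F ((i₀:ℤ) + 1 + k)
      = ∑ k ∈ Finset.range (m+1), ((k:ℝ)+1) * ((-c) * w k + (1/2+3*c) * w (k+1)
        + (-3*c) * w (k+2) + (c-1/2) * w (k+3)) * w (k+2) := by
    refine Finset.sum_congr rfl fun k _ => ?_
    simp only [F, R, w]
    rw [if_neg (by omega)]
    push_cast
    ring_nf
  have e0 : F i₀ = 0 := by simp [F]
  have sL : ∑ k ∈ Finset.range (m+1), f ((i₀:ℤ) - 1 - k) ^ 2
      = ∑ k ∈ Finset.range (m+1), v (k+2) ^ 2 := by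
    refine Finset.sum_congr rfl fun k _ => ?_
    simp only [v]
    push_cast
    ring_nf
  have sR : ∑ k ∈ Finset.range (m+1), f ((i₀:ℤ) + 1 + k) ^ 2
      = ∑ k ∈ Finset.range (m+1), w (k+2) ^ 2 := by
    refine Finset.sum_congr rfl fun k _ => ?_
    simp only [w]
    push_cast
    ring_nf
  have a1 : v 1 = f i₀ := by simp [v]
  have a2 : w 1 = f i₀ := by simp [w]
  have a3 : v 0 = w 2 := by simp only [v, w]; congr 1; push_cast; ring
  have a4 : w 0 = v 2 := by simp only [v, w]; congr 1; push_cast; ring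
  have bv : v 2 ^ 2 ≤ ∑ k ∈ Finset.range (m+1), v (k+2) ^ 2 :=
    Finset.single_le_sum (f := fun k => v (k+2) ^ 2) (fun _ _ => sq_nonneg _)
      (Finset.mem_range.2 (Nat.succ_pos m))
  have bw : w 2 ^ 2 ≤ ∑ k ∈ Finset.range (m+1), w (k+2) ^ 2 :=
    Finset.single_le_sum (f := fun k => w (k+2) ^ 2) (fun _ _ => sq_nonneg _)
      (Finset.mem_range.2 (Nat.succ_pos m))
  have hKA : K ≤ |c - 1/2| + 2*c := by
    rw [hK, abs_le]
    constructor <;> cases abs_cases (c - 1/2) <;> linarith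
  rw [eL, eR, e0, sL, sR]
  rw [a1, a3] at sv
  rw [a2, a4] at sw
  generalize |c - 1/2| = A at *
  generalize (∑ k ∈ Finset.range (m+1), v (k+2) ^ 2) = Sv at *
  generalize (∑ k ∈ Finset.range (m+1), w (k+2) ^ 2) = Sw at *
  generalize (∑ k ∈ Finset.range (m+1), ((k:ℝ)+1) * ((-c) * v k + (1/2+3*c) * v (k+1)
        + (-3*c) * v (k+2) + (c-1/2) * v (k+3)) * v (k+2)) = Tv at *
  generalize (∑ k ∈ Finset.range (m+1), ((k:ℝ)+1) * ((-c) * w k + (1/2+3*c) * w (k+1)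
        + (-3*c) * w (k+2) + (c-1/2) * w (k+3)) * w (k+2)) = Tw at *
  generalize f i₀ = y at *
  generalize v 2 = p at *
  generalize w 2 = q at *
  have main : Tv + Tw ≤ (A + 10*c) * (y^2 + Sv + Sw) :=
    uc_final c K A Sv Sw Tv Tw y p q hc hKA bv bw (by linarith only [sv]) (by linarith only [sw])
  have := mul_le_mul_of_nonneg_left main hbtil.le
  linarith
end

section
/- Let A and B be real N×N matrices and c ∈ ℝ, b ≥ 0 with μ₂[A] ≤ c and ‖B‖₂ ≤ b. Let Δt > 0 satisfy (c + b)Δt < 2. Then I − (Δt/2)A is invertible and any vectors satisfying the fixed-point error recursion ε_ℓ = (Δt/2)(I − (Δt/2)A)^{−1} B ε_{ℓ−1} obey ‖ε_ℓ‖₂ ≤ Θ·‖ε_{ℓ−1}‖₂ with Θ = ((Δt/2)b)/(1 − (Δt/2)c) < 1; hence the iteration converges in the ℓ2-norm. -/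
open Matrix

theorem aux_dot_self {N : ℕ} (v : Fin N → ℝ) : v ⬝ᵥ v = l2norm v ^ 2 := by
  unfold l2norm
  rw [Real.sq_sqrt (Finset.sum_nonneg fun i _ => sq_nonneg _)]
  simp [dotProduct, sq]

theorem aux_cs {N : ℕ} (v w : Fin N → ℝ) : v ⬝ᵥ w ≤ l2norm v * l2norm w :=
  Real.sum_mul_le_sqrt_mul_sqrt _ _ _

theorem aux_nonneg {N : ℕ} (v : Fin N → ℝ) : 0 ≤ l2norm v := Real.sqrt_nonneg _

theorem aux_coord {N : ℕ} (v : Fin N → ℝ) (i : Fin N) : |v i| ≤ l2norm v := by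
  unfold l2norm
  apply Real.abs_le_sqrt
  exact Finset.single_le_sum (f := fun i => (v i)^2) (fun i _ => sq_nonneg _) (Finset.mem_univ i)

theorem aux_smul {N : ℕ} (a : ℝ) (ha : 0 ≤ a) (v : Fin N → ℝ) :
    l2norm (a • v) = a * l2norm v := by
  unfold l2norm
  simp only [Pi.smul_apply, smul_eq_mul, mul_pow, ← Finset.mul_sum]
  rw [Real.sqrt_mul (sq_nonneg a), Real.sqrt_sq ha]

theorem aux_lower {N : ℕ} (A : Matrix (Fin N) (Fin N) ℝ) (c h : ℝ) (hh : 0 < h)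
    (hA : ∀ v : Fin N → ℝ, (A.mulVec v) ⬝ᵥ v ≤ c * (v ⬝ᵥ v)) (w : Fin N → ℝ) :
    (1 - h * c) * l2norm w ≤ l2norm ((1 - h • A).mulVec w) := by
  have h1 := aux_cs ((1 - h • A).mulVec w) w
  have h2 : ((1 - h • A).mulVec w) ⬝ᵥ w = w ⬝ᵥ w - h * (A.mulVec w ⬝ᵥ w) := by
    simp [Matrix.sub_mulVec, Matrix.smul_mulVec, sub_dotProduct]
  have h3 := mul_le_mul_of_nonneg_left (hA w) hh.le
  rw [h2] at h1
  rw [aux_dot_self] at h1 h3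
  rcases (aux_nonneg w).eq_or_lt with h0 | h0
  · rw [← h0, mul_zero]; exact aux_nonneg _
  · refine le_of_mul_le_mul_right ?_ h0
    nlinarith

/-- Let A, B be real N×N matrices, c ∈ ℝ, b ≥ 0 with μ₂[A] ≤ c and
‖B‖₂ ≤ b, and let Δt > 0 satisfy (c + b)Δt < 2.  Then I − (Δt/2)A is invertible
and any vectors satisfying the fixed-point error recursion
ε_ℓ = (Δt/2)(I − (Δt/2)A)⁻¹ B ε_{ℓ−1} obey ‖ε_ℓ‖₂ ≤ Θ‖ε_{ℓ−1}‖₂ with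
Θ = ((Δt/2)b)/(1 − (Δt/2)c) < 1; hence the iteration converges in the ℓ2-norm. -/
theorem cnfi_fixed_point_convergence_l2
    (N : ℕ) (A B : Matrix (Fin N) (Fin N) ℝ) (c b : ℝ) (hb : 0 ≤ b)
    (hA : ∀ v : Fin N → ℝ, (A.mulVec v) ⬝ᵥ v ≤ c * (v ⬝ᵥ v))
    (hB : ∀ v : Fin N → ℝ, l2norm (B.mulVec v) ≤ b * l2norm v)
    (Δt : ℝ) (hΔt : 0 < Δt) (hcb : (c + b) * Δt < 2) :
    IsUnit (1 - (Δt/2) • A) ∧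
    ((Δt/2) * b) / (1 - (Δt/2) * c) < 1 ∧
    ∀ ε : ℕ → Fin N → ℝ,
      (∀ ℓ : ℕ, 1 ≤ ℓ →
        ε ℓ = (Δt/2) • ((1 - (Δt/2) • A)⁻¹).mulVec (B.mulVec (ε (ℓ - 1)))) →
      (∀ ℓ : ℕ, 1 ≤ ℓ →
        l2norm (ε ℓ) ≤ (((Δt/2) * b) / (1 - (Δt/2) * c)) * l2norm (ε (ℓ - 1))) ∧
      Filter.Tendsto (fun ℓ => ε ℓ) Filter.atTop (nhds 0) := by
  have hh : 0 < Δt / 2 := by linarith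
  have hpos : 0 < 1 - (Δt/2) * c := by nlinarith
  have hΘ : ((Δt/2) * b) / (1 - (Δt/2) * c) < 1 := by
    rw [div_lt_one hpos]; nlinarith
  have hΘ0 : 0 ≤ ((Δt/2) * b) / (1 - (Δt/2) * c) := by positivity
  have low := aux_lower A c (Δt/2) hh hA
  have hU : IsUnit (1 - (Δt/2) • A) := by
    rw [← Matrix.mulVec_injective_iff_isUnit]
    intro x y hxy
    have h1 := low (x - y)
    have h2 : (1 - (Δt/2) • A).mulVec (x - y) = 0 := by
      rw [Matrix.mulVec_sub]; exact sub_eq_zero.mpr hxy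
    rw [h2] at h1
    have h3 : l2norm (0 : Fin N → ℝ) = 0 := by simp [l2norm]
    rw [h3] at h1
    have h4 : l2norm (x - y) ≤ 0 := by
      by_contra h
      push Not at h
      have := mul_pos hpos h
      linarith
    funext i
    have h5 := (aux_coord (x - y) i).trans h4
    have h6 := abs_nonpos_iff.mp h5
    exact sub_eq_zero.mp h6
  refine ⟨hU, hΘ, fun ε hε => ?_⟩
  have step : ∀ ℓ : ℕ, 1 ≤ ℓ →
        l2norm (ε ℓ) ≤ (((Δt/2) * b) / (1 - (Δt/2) * c)) * l2norm (ε (ℓ - 1)) := by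
    intro ℓ hℓ
    rw [div_mul_eq_mul_div, le_div_iff₀ hpos]
    have h1 := low (ε ℓ)
    have h2 : (1 - (Δt/2) • A).mulVec (ε ℓ) = (Δt/2) • B.mulVec (ε (ℓ - 1)) := by
      rw [hε ℓ hℓ, Matrix.mulVec_smul, Matrix.mulVec_mulVec,
        Matrix.mul_nonsing_inv _ ((Matrix.isUnit_iff_isUnit_det _).mp hU), Matrix.one_mulVec]
    rw [h2, aux_smul _ hh.le] at h1
    have h3 := mul_le_mul_of_nonneg_left (hB (ε (ℓ - 1))) hh.le
    linarith
  refine ⟨step, ?_⟩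
  generalize ((Δt/2) * b) / (1 - (Δt/2) * c) = Θ at *
  have geo : ∀ ℓ, l2norm (ε ℓ) ≤ Θ ^ ℓ * l2norm (ε 0) := by
    intro ℓ
    induction ℓ with
    | zero => simp
    | succ k ih =>
      have h1 := step (k + 1) (by omega)
      rw [Nat.add_sub_cancel] at h1
      have h2 := mul_le_mul_of_nonneg_left ih hΘ0
      rw [pow_succ]
      linarith
  rw [tendsto_pi_nhds]
  intro i
  have hlim : Filter.Tendsto (fun ℓ => Θ ^ ℓ * l2norm (ε 0)) Filter.atTop (nhds 0) := by
    simpa using (tendsto_pow_atTop_nhds_zero_of_lt_one hΘ0 hΘ).mul_const (l2norm (ε 0))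
  exact squeeze_zero_norm (fun ℓ => (aux_coord (ε ℓ) i).trans (geo ℓ)) hlim
end

section
/- Let M be a real N×N matrix, c ∈ ℝ with μ₂[M] ≤ c, and Δt > 0 with cΔt ≤ 1. Then I − (Δt/2)M is invertible and the Crank–Nicolson amplification matrix R(ΔtM) = (I − (Δt/2)M)^{−1}(I + (Δt/2)M) satisfies ‖R(ΔtM)ⁿ‖₂ ≤ (1 + 2Δt·c⁺)ⁿ ≤ e^{2nΔt·c⁺} for every integer n ≥ 0, where c⁺ = max(c, 0). In particular ‖R(ΔtM)ⁿ‖₂ ≤ e^{2T·c⁺} whenever nΔt ≤ T. -/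
open Matrix

theorem cn_l2norm_eq {N : ℕ} (v : Fin N → ℝ) : l2norm v = Real.sqrt (v ⬝ᵥ v) := by
  unfold l2norm
  congr 1
  simp only [dotProduct]
  exact Finset.sum_congr rfl fun i _ => by ring

theorem cn_dot_nonneg {N : ℕ} (v : Fin N → ℝ) : 0 ≤ v ⬝ᵥ v := by
  simp only [dotProduct]
  exact Finset.sum_nonneg fun i _ => mul_self_nonneg _

/-- Lower bound for the implicit half step. -/
theorem cn_lower {N : ℕ} (u w : Fin N → ℝ) (h p : ℝ) (hh : 0 ≤ h)
    (hx : h * p ≤ 1 / 2) (hD : u ⬝ᵥ w ≤ p * (w ⬝ᵥ w)) :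
    (1 - h * p) ^ 2 * (w ⬝ᵥ w) ≤ (w - h • u) ⬝ᵥ (w - h • u) := by
  have h1 := cn_dot_nonneg ((w - h • u) - (1 - h * p) • w)
  have hc := dotProduct_comm w u
  simp only [sub_dotProduct, dotProduct_sub, smul_dotProduct, dotProduct_smul, smul_eq_mul, hc]
    at h1 ⊢
  have h2 := mul_le_mul_of_nonneg_left hD hh
  have h3 : 0 ≤ (1 - h * p) * (h * (p * (w ⬝ᵥ w)) - h * (u ⬝ᵥ w)) :=
    mul_nonneg (by linarith) (by linarith)
  nlinarith

theorem cn_step {N : ℕ} (u w : Fin N → ℝ) (h p : ℝ) (hh : 0 ≤ h) (hp : 0 ≤ p)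
    (hx : h * p ≤ 1 / 2) (hD : u ⬝ᵥ w ≤ p * (w ⬝ᵥ w)) :
    (w + h • u) ⬝ᵥ (w + h • u) ≤ (1 + 4 * (h * p)) ^ 2 * ((w - h • u) ⬝ᵥ (w - h • u)) := by
  have hl := cn_lower u w h p hh hx hD
  have hS := cn_dot_nonneg w
  have hc := dotProduct_comm w u
  have he : (w + h • u) ⬝ᵥ (w + h • u) = (w - h • u) ⬝ᵥ (w - h • u) + 4 * (h * (u ⬝ᵥ w)) := by
    simp only [sub_dotProduct, dotProduct_sub, add_dotProduct, dotProduct_add, smul_dotProduct,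
      dotProduct_smul, smul_eq_mul, hc]
    ring
  rw [he]
  have h2 := mul_le_mul_of_nonneg_left hD hh
  generalize (w - h • u) ⬝ᵥ (w - h • u) = V at *
  generalize w ⬝ᵥ w = S at *
  have hx0 : 0 ≤ h * p := mul_nonneg hh hp
  rw [← mul_assoc] at h2
  generalize h * p = x at *
  have h4 : 0 ≤ (1 - 2 * x) * (1 + 2 * x - 2 * x ^ 2) * S :=
    mul_nonneg (mul_nonneg (by linarith) (by nlinarith)) hS
  have h5 := mul_le_mul_of_nonneg_left hl (by linarith : 0 ≤ 2 + 4 * x)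
  have h6 : S ≤ (2 + 4 * x) * V := by nlinarith
  have h7 := mul_le_mul_of_nonneg_left h6 hx0
  nlinarith

/-- Let M be a real N×N matrix, c ∈ ℝ with μ₂[M] ≤ c, and Δt > 0
with cΔt ≤ 1.  Then I − (Δt/2)M is invertible and the Crank–Nicolson
amplification matrix R(ΔtM) = (I − (Δt/2)M)⁻¹(I + (Δt/2)M) satisfies
‖R(ΔtM)ⁿ‖₂ ≤ (1 + 2Δt c⁺)ⁿ ≤ e^{2nΔt c⁺} for every n ≥ 0, where c⁺ = max(c,0);
in particular ‖R(ΔtM)ⁿ‖₂ ≤ e^{2T c⁺} whenever nΔt ≤ T. -/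
theorem crank_nicolson_l2_stability
    (N : ℕ) (M : Matrix (Fin N) (Fin N) ℝ) (c : ℝ)
    (hM : ∀ v : Fin N → ℝ, (M.mulVec v) ⬝ᵥ v ≤ c * (v ⬝ᵥ v))
    (Δt : ℝ) (hΔt : 0 < Δt) (hc : c * Δt ≤ 1) :
    IsUnit (1 - (Δt/2) • M) ∧
    ∀ n : ℕ,
      (∀ v : Fin N → ℝ,
        l2norm (((((1 - (Δt/2) • M)⁻¹) * (1 + (Δt/2) • M)) ^ n).mulVec v)
          ≤ (1 + 2*Δt*(max c 0))^n * l2norm v) ∧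
      (1 + 2*Δt*(max c 0))^n ≤ Real.exp (2*(n : ℝ)*Δt*(max c 0)) ∧
      (∀ T : ℝ, (n : ℝ)*Δt ≤ T → ∀ v : Fin N → ℝ,
        l2norm (((((1 - (Δt/2) • M)⁻¹) * (1 + (Δt/2) • M)) ^ n).mulVec v)
          ≤ Real.exp (2*T*(max c 0)) * l2norm v) := by
  obtain ⟨p, hpdef⟩ : ∃ p, p = max c 0 := ⟨_, rfl⟩
  rw [← hpdef]
  have hp : 0 ≤ p := hpdef ▸ le_max_right c 0
  have hcp : c ≤ p := hpdef ▸ le_max_left c 0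
  have hx : Δt / 2 * p ≤ 1 / 2 := by
    rcases max_choice c 0 with h | h <;> rw [hpdef, h] <;> linarith
  have hD : ∀ v : Fin N → ℝ, (M.mulVec v) ⬝ᵥ v ≤ p * (v ⬝ᵥ v) := fun v =>
    (hM v).trans (mul_le_mul_of_nonneg_right hcp (cn_dot_nonneg v))
  have hh : 0 ≤ Δt / 2 := by linarith
  have hA : ∀ w : Fin N → ℝ, (1 - (Δt/2) • M).mulVec w = w - (Δt/2) • M.mulVec w := fun w => by
    rw [sub_mulVec, one_mulVec, smul_mulVec]
  have hB : ∀ w : Fin N → ℝ, (1 + (Δt/2) • M).mulVec w = w + (Δt/2) • M.mulVec w := fun w => by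
    rw [add_mulVec, one_mulVec, smul_mulVec]
  have hU : IsUnit (1 - (Δt/2) • M) := by
    rw [← Matrix.mulVec_injective_iff_isUnit]
    refine (injective_iff_map_eq_zero (Matrix.mulVecLin (1 - (Δt/2) • M))).mpr ?_
    intro w hw
    rw [Matrix.mulVecLin_apply, hA] at hw
    have hl := cn_lower (M.mulVec w) w (Δt/2) p hh hx (hD w)
    rw [hw, dotProduct_zero] at hl
    have hS := cn_dot_nonneg w
    have : (0:ℝ) < (1 - Δt / 2 * p) ^ 2 := by
      apply pow_pos; linarith
    exact dotProduct_self_eq_zero.mp (le_antisymm (by nlinarith) hS)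
  refine ⟨hU, ?_⟩
  have hdet := (Matrix.isUnit_iff_isUnit_det _).mp hU
  have hk : 0 ≤ 1 + 2 * Δt * p := by positivity
  have hstep : ∀ v : Fin N → ℝ,
      l2norm ((((1 - (Δt/2) • M)⁻¹) * (1 + (Δt/2) • M)).mulVec v)
        ≤ (1 + 2 * Δt * p) * l2norm v := by
    intro v
    have hcomm : (1 - (Δt/2) • M)⁻¹ * (1 + (Δt/2) • M)
        = (1 + (Δt/2) • M) * (1 - (Δt/2) • M)⁻¹ := by
      have e : (1 + (Δt/2) • M) * (1 - (Δt/2) • M) = (1 - (Δt/2) • M) * (1 + (Δt/2) • M) := by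
        generalize (Δt/2) • M = X
        noncomm_ring
      calc _ = (1 - (Δt/2) • M)⁻¹ * ((1 + (Δt/2) • M) * (1 - (Δt/2) • M))
            * (1 - (Δt/2) • M)⁻¹ := by
              rw [← mul_assoc, Matrix.mul_nonsing_inv_cancel_right _ _ hdet]
        _ = _ := by
              rw [e, Matrix.nonsing_inv_mul_cancel_left _ _ hdet]
    rw [hcomm, ← mulVec_mulVec]
    obtain ⟨w, hw⟩ : ∃ w, w = (1 - (Δt/2) • M)⁻¹.mulVec v := ⟨_, rfl⟩
    have hv : v = w - (Δt/2) • M.mulVec w := by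
      rw [← hA, hw, mulVec_mulVec, Matrix.mul_nonsing_inv _ hdet, one_mulVec]
    rw [← hw, hB, cn_l2norm_eq, cn_l2norm_eq v, hv]
    have hs := cn_step (M.mulVec w) w (Δt/2) p hh hp hx (hD w)
    have e : 1 + 4 * (Δt / 2 * p) = 1 + 2 * Δt * p := by ring
    rw [e] at hs
    refine (Real.sqrt_le_sqrt hs).trans_eq ?_
    rw [Real.sqrt_mul (sq_nonneg _), Real.sqrt_sq hk]
  intro n
  have h1 : ∀ v : Fin N → ℝ,
        l2norm (((((1 - (Δt/2) • M)⁻¹) * (1 + (Δt/2) • M)) ^ n).mulVec v)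
          ≤ (1 + 2*Δt*p)^n * l2norm v := by
    induction n with
    | zero => intro v; simp
    | succ k ih =>
      intro v
      rw [pow_succ', ← mulVec_mulVec]
      refine (hstep _).trans ((mul_le_mul_of_nonneg_left (ih v) hk).trans_eq ?_)
      ring
  have h2 : (1 + 2*Δt*p)^n ≤ Real.exp (2*(n : ℝ)*Δt*p) := by
    have := pow_le_pow_left₀ hk (by linarith [Real.add_one_le_exp (2*Δt*p)] :
      1 + 2*Δt*p ≤ Real.exp (2*Δt*p)) n
    rw [← Real.exp_nat_mul] at this
    refine this.trans_eq ?_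
    congr 1
    ring
  refine ⟨h1, h2, fun T hT v => (h1 v).trans ?_⟩
  refine mul_le_mul_of_nonneg_right (h2.trans ?_) (Real.sqrt_nonneg _)
  apply Real.exp_le_exp.mpr
  have := mul_le_mul_of_nonneg_right hT hp
  linarith
end

section
/- For every θ ∈ [1/4, 1/2] and every real x with 0 ≤ x ≤ 1/θ, the polynomial Q_θ(x) = (12θ⁴ − 28θ³ + 14θ² − 2θ)·x² + (−24θ³ + 36θ² − 12θ + 1)·x + 12θ² − 12θ + 2 satisfies Q_θ(x) ≤ 0. -/
/-- For every θ ∈ [1/4, 1/2] and every real x with 0 ≤ x ≤ 1/θ, the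
polynomial Q_θ(x) satisfies Q_θ(x) ≤ 0. -/
theorem Qtheta_nonpos (θ : ℝ) (hθ : θ ∈ Set.Icc (1/4 : ℝ) (1/2))
    (x : ℝ) (hx : x ∈ Set.Icc (0 : ℝ) (1/θ)) :
    (12*θ^4 - 28*θ^3 + 14*θ^2 - 2*θ) * x^2
      + (-24*θ^3 + 36*θ^2 - 12*θ + 1) * x
      + (12*θ^2 - 12*θ + 2) ≤ 0 := by
  obtain ⟨h1, h2⟩ := hθ
  obtain ⟨h3, h4⟩ := hx
  have h0 : 0 < θ := by linarith
  have hy : θ * x ≤ 1 := by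
    rw [le_div_iff₀ h0] at h4
    linarith
  have hy0 : 0 ≤ θ * x := mul_nonneg h0.le h3
  -- Bernstein expansion in y = θ x of θ times the polynomial
  have hc : 0 ≤ -(12*θ^2 - 12*θ + 2) := by nlinarith
  have e1 : 0 ≤ θ * (-(12*θ^2 - 12*θ + 2)) * (1 - θ*x)^2 := by positivity
  have e2 : 0 ≤ ((1 - 2*θ) * (6*θ - 1)) * ((θ*x) * (1 - θ*x)) :=
    mul_nonneg (mul_nonneg (by linarith) (by linarith))
      (mul_nonneg hy0 (by linarith))
  have e3 : 0 ≤ ((1 - 2*θ) * (θ*x))^2 := sq_nonneg _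
  by_contra! h
  have h5 := mul_pos h0 h
  nlinarith only [e1, e2, e3, h5]
end

section
/- For every θ ∈ [1/4, 1/2] and every real x with 0 ≤ x ≤ 1/θ, one has P_{θ,1}(x)² ≤ P_{θ,2}(x)², where P_{θ,1}(x) = (1/2 − 2θ + θ²)(1 − θx)² and P_{θ,2}(x) = θ²·(1 + (1−2θ)x + (1/2 − 2θ + θ²)x²). -/
/-- For every θ ∈ [1/4, 1/2] and every real x with 0 ≤ x ≤ 1/θ,
one has P_{θ,1}(x)² ≤ P_{θ,2}(x)². -/
theorem P1_sq_le_P2_sq (θ : ℝ) (hθ : θ ∈ Set.Icc (1/4 : ℝ) (1/2))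
    (x : ℝ) (hx : x ∈ Set.Icc (0 : ℝ) (1/θ)) :
    ((1/2 - 2*θ + θ^2) * (1 - θ*x)^2)^2
      ≤ (θ^2 * (1 + (1 - 2*θ)*x + (1/2 - 2*θ + θ^2)*x^2))^2 := by
  obtain ⟨h1, h2⟩ := hθ
  obtain ⟨hx0, hx1⟩ := hx
  have hpos : 0 < θ := by linarith
  have hy1 : 0 ≤ 1 - θ * x := by
    rw [le_div_iff₀ hpos] at hx1
    linarith
  have hy0 : 0 ≤ θ * x := by positivity
  have a1 : 0 ≤ 4 * θ - 1 := by linarith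
  have a2 : 0 ≤ 1 / 2 - θ := by linarith
  have a3 : 0 ≤ 1 - θ := by linarith
  apply sq_le_sq'
  · have key : 0 ≤ 2 * (1/2 - θ)^2 + (1 - θ) * (4*θ - 1) * (θ*x)
        + 2 * (1/2 - 2*θ + θ^2) * (θ*x)^2 := by
      rcases le_total 0 (1/2 - 2*θ + θ^2) with hc | hc
      · positivity
      · have e1 : 0 ≤ (1 - θ*x) * (2 * (1/2 - θ)^2) := by positivity
        have e2 : 0 ≤ (θ*x) * (1/2 - θ) := by positivity
        have e3 : 0 ≤ 2 * (-(1/2 - 2*θ + θ^2)) * ((θ*x) * (1 - θ*x)) :=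
          mul_nonneg (by linarith) (mul_nonneg hy0 hy1)
        linear_combination e1 + e2 + e3
    linear_combination key
  · have e1 : 0 ≤ (1 - θ*x) * (4*θ - 1) := by positivity
    have e2 : 0 ≤ (θ*x) * (1/2 - θ) := by positivity
    linear_combination (1/2) * e1 + e2
end

section
/- For every θ ∈ [1/4, 1/2], the function x ↦ R_θ(x) is convex on the interval [0, 1/θ). Consequently, since R_θ(0) = 1, for every ν with 0 < ν < 1/θ and every x with 0 ≤ x ≤ ν one has R_θ(x) ≤ 1 + ((R_θ(ν) − 1)/ν)·x. -/
/-- The DIRK stability function, restricted to real arguments. -/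
noncomputable def Rre (θ x : ℝ) : ℝ :=
  (1 + (1 - 2*θ)*x + (1/2 - 2*θ + θ^2)*x^2) / (1 - θ*x)^2

theorem Rre_hasDeriv (θ x : ℝ) (h : 1 - θ*x ≠ 0) :
    HasDerivAt (Rre θ) ((1 - (3*θ-1)*x) / (1-θ*x)^3) x := by
  have hid : HasDerivAt (fun y : ℝ => y) 1 x := hasDerivAt_id x
  have hw : HasDerivAt (fun y : ℝ => (1 - θ*y)^2) _ x := ((hid.const_mul θ).const_sub 1).pow 2
  have hn : HasDerivAt (fun y : ℝ => 1 + (1 - 2*θ)*y + (1/2 - 2*θ + θ^2)*y^2) _ x :=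
    ((hid.const_mul (1-2*θ)).const_add 1).add ((hid.pow 2).const_mul (1/2 - 2*θ + θ^2))
  have hd := hn.div hw (pow_ne_zero 2 h)
  refine HasDerivAt.congr_deriv (f := Rre θ) hd ?_
  rw [div_eq_div_iff (by positivity) (by positivity)]
  norm_num
  ring

theorem Rre_hasDeriv2 (θ x : ℝ) (h : 1 - θ*x ≠ 0) :
    HasDerivAt (fun y : ℝ => (1 - (3*θ-1)*y) / (1-θ*y)^3)
      ((1 - 2*θ*(3*θ-1)*x) / (1-θ*x)^4) x := by
  have hid : HasDerivAt (fun y : ℝ => y) 1 x := hasDerivAt_id x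
  have hw : HasDerivAt (fun y : ℝ => (1 - θ*y)^3) _ x := ((hid.const_mul θ).const_sub 1).pow 3
  have hn : HasDerivAt (fun y : ℝ => 1 - (3*θ-1)*y) _ x :=
    (hid.const_mul (3*θ-1)).const_sub 1
  have hd := hn.div hw (pow_ne_zero 3 h)
  refine HasDerivAt.congr_deriv hd ?_
  rw [div_eq_div_iff (by positivity) (by positivity)]
  norm_num
  ring

/-- For every θ ∈ [1/4, 1/2] the function x ↦ R_θ(x) is convex on
[0, 1/θ); consequently, since R_θ(0) = 1, for every ν with 0 < ν < 1/θ and every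
x with 0 ≤ x ≤ ν one has R_θ(x) ≤ 1 + ((R_θ(ν) − 1)/ν)·x. -/
theorem Rtheta_convex (θ : ℝ) (hθ : θ ∈ Set.Icc (1/4 : ℝ) (1/2)) :
    ConvexOn ℝ (Set.Ico (0 : ℝ) (1/θ)) (Rre θ) ∧
    (∀ ν : ℝ, 0 < ν → ν < 1/θ → ∀ x : ℝ, 0 ≤ x → x ≤ ν →
      Rre θ x ≤ 1 + ((Rre θ ν - 1)/ν) * x) := by
  obtain ⟨h1, h2⟩ := hθ
  have hpos : 0 < θ := by linarith
  have hlt : ∀ x : ℝ, x < 1/θ → 0 < 1 - θ*x := by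
    intro x hx
    rw [lt_div_iff₀ hpos] at hx
    linarith
  have hc : ConvexOn ℝ (Set.Ico (0 : ℝ) (1/θ)) (Rre θ) := by
    refine convexOn_of_hasDerivWithinAt2_nonneg (convex_Ico _ _)
      (f' := fun y : ℝ => (1 - (3*θ-1)*y) / (1-θ*y)^3)
      (f'' := fun x : ℝ => (1 - 2*θ*(3*θ-1)*x) / (1-θ*x)^4) ?_ ?_ ?_ ?_
    · intro x hx
      exact (Rre_hasDeriv θ x (hlt x hx.2).ne').continuousAt.continuousWithinAt
    · intro x hx
      exact (Rre_hasDeriv θ x (hlt x (interior_subset hx).2).ne').hasDerivWithinAt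
    · intro x hx
      exact (Rre_hasDeriv2 θ x (hlt x (interior_subset hx).2).ne').hasDerivWithinAt
    · intro x hx
      have hx' := interior_subset hx
      have hw := hlt x hx'.2
      have : 0 ≤ θ * x := mul_nonneg hpos.le hx'.1
      apply div_nonneg _ (by positivity)
      nlinarith
  refine ⟨hc, ?_⟩
  intro ν hν hν' x hx hxν
  have h0 : Rre θ 0 = 1 := by simp [Rre]
  have ha : 0 ≤ 1 - x/ν := by
    rw [sub_nonneg, div_le_one hν]; exact hxν
  have m0 : (0:ℝ) ∈ Set.Ico (0 : ℝ) (1/θ) := ⟨le_rfl, by positivity⟩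
  have mν : ν ∈ Set.Ico (0 : ℝ) (1/θ) := ⟨hν.le, hν'⟩
  have hb : 0 ≤ x/ν := by positivity
  have hab : 1 - x/ν + x/ν = 1 := by ring
  have h := hc.2 m0 mν ha hb hab
  simp only [smul_eq_mul, mul_zero, zero_add, h0, div_mul_cancel₀ x hν.ne'] at h
  calc Rre θ x ≤ _ := h
    _ = _ := by field_simp; ring
end
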